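/- Let α ∈ (0,1) and L > 0. Then for every t ∈ ℝ, the Caputo fractional derivative with sliding fixed memory length L of the sine function satisfies (1/Γ(1−α)) ∫_{t−L}^{t} (t−τ)^{−α} cos τ dτ = a·sin(t−L) + b·cos(t−L), where a = L^{−α} ( E_{2,1−α}(−L²) − 1/Γ(1−α) ) and b = L^{1−α} E_{2,2−α}(−L²). -/

import Mathlib

open Real MeasureTheory intervalIntegral

/-- The generalized Mittag-Leffler function `E_{a,b}(x) = Σ_{k=0}^∞ x^k / Γ(ak + b)`. -/
noncomputable def mittagLeffler (a b x : ℝ) : ℝ :=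
  ∑' k : ℕ, x ^ k / Real.Gamma (a * k + b)

/-!
By the beta integral, the Riemann–Liouville integral of order `β` maps `u ^ (s - 1) / Γ(s)` to
`x ^ (s + β - 1) / Γ(s + β)`. Summed over `s = a k + b`, this says that it maps
`u ^ (b - 1) E_{a,b}(c u ^ a)` to `x ^ (b + β - 1) E_{a,b+β}(c x ^ a)`. Cosine and sine are the
cases `a = 2`, `c = -1` with `b = 1` and `b = 2`. The window `[t - L, t]` is translated to `[0, L]`,
where the addition formula for `cos (u + (t - L))` separates the two contributions. The sine
contribution involves `E_{2,3-α}`, and `E_{2,1-α}(y) = 1 / Γ(1 - α) + y E_{2,3-α}(y)` gives it the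
stated form.
-/

open Filter

variable {a b x α β s L : ℝ} {f g : ℝ → ℝ}

lemma rpow_mul_Gamma_le_Gamma_add (hx : 1 < x) (ha : 0 < a) :
    (x - 1) ^ a * Gamma x ≤ Gamma (x + a) := by
  have hx₁ : 0 < x - 1 := by linarith
  have hΓ : 0 < Gamma (x - 1) := Gamma_pos_of_pos hx₁
  have hΓx : 0 < Gamma x := Gamma_pos_of_pos (by linarith)
  have hstep : log (Gamma x) - log (Gamma (x - 1)) = log (x - 1) := by
    have hrec : Gamma x = (x - 1) * Gamma (x - 1) := by
      simpa using Gamma_add_one hx₁.ne'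
    rw [hrec, log_mul hx₁.ne' hΓ.ne', add_sub_cancel_right]
  -- Compare the slopes of `log ∘ Gamma` on `[x - 1, x]` and on `[x, x + a]`.
  have hslope := convexOn_log_Gamma.slope_mono_adjacent (x := x - 1) (y := x) (z := x + a)
    hx₁ (Set.mem_Ioi.2 (by linarith)) (by linarith) (by linarith)
  simp only [Function.comp_apply, hstep, sub_sub_cancel, div_one, add_sub_cancel_left] at hslope
  rw [le_div_iff₀ ha] at hslope
  rw [← log_le_log_iff (by positivity) (Gamma_pos_of_pos (by linarith)),
    log_mul (by positivity) hΓx.ne', log_rpow hx₁]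
  linarith

lemma summable_mittagLeffler (ha : 0 < a) (b x : ℝ) :
    Summable fun k : ℕ => x ^ k / Gamma (a * k + b) := by
  have harg : Tendsto (fun k : ℕ => a * k + b) atTop atTop :=
    tendsto_atTop_add_const_right _ _ (tendsto_natCast_atTop_atTop.const_mul_atTop ha)
  have hgrowth : Tendsto (fun k : ℕ => (a * k + b - 1) ^ a) atTop atTop :=
    (tendsto_rpow_atTop ha).comp (tendsto_atTop_add_const_right _ (-1) harg)
  refine summable_of_ratio_norm_eventually_le (r := 1 / 2) (by norm_num) ?_
  filter_upwards [harg.eventually_gt_atTop 1, hgrowth.eventually_ge_atTop (2 * |x|)] with k hk hx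
  set y := a * k + b
  have hΓ : 0 < Gamma y := Gamma_pos_of_pos (by linarith)
  have hΓ' : 0 < Gamma (y + a) := Gamma_pos_of_pos (by linarith)
  have hratio : 2 * |x| * Gamma y ≤ Gamma (y + a) :=
    (mul_le_mul_of_nonneg_right hx hΓ.le).trans (rpow_mul_Gamma_le_Gamma_add hk ha)
  have hsucc : a * (k + 1 : ℕ) + b = y + a := by
    push_cast
    ring
  rw [hsucc, norm_div, norm_div, norm_pow, norm_pow, norm_eq_abs, norm_of_nonneg hΓ.le,
    norm_of_nonneg hΓ'.le, pow_succ, ← mul_div_assoc, div_le_div_iff₀ hΓ' hΓ]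
  calc |x| ^ k * |x| * Gamma y = 1 / 2 * |x| ^ k * (2 * |x| * Gamma y) := by ring
    _ ≤ 1 / 2 * |x| ^ k * Gamma (y + a) := by gcongr

lemma mittagLeffler_eq_one_div_Gamma_add (ha : 0 < a) (b x : ℝ) :
    mittagLeffler a b x = 1 / Gamma b + x * mittagLeffler a (a + b) x := by
  rw [mittagLeffler, (summable_mittagLeffler ha b x).tsum_eq_zero_add, mittagLeffler,
    ← tsum_mul_left]
  congr 1
  · simp
  · refine tsum_congr fun k => ?_
    push_cast
    rw [pow_succ', mul_div_assoc, mul_add_one, add_assoc]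

lemma cos_eq_mittagLeffler (x : ℝ) : cos x = mittagLeffler 2 1 (-x ^ 2) := by
  rw [cos_eq_tsum, mittagLeffler]
  refine tsum_congr fun k => ?_
  rw [neg_pow (x ^ 2), ← pow_mul, ← Gamma_nat_eq_factorial]
  push_cast
  rfl

lemma sin_eq_mul_mittagLeffler (x : ℝ) : sin x = x * mittagLeffler 2 2 (-x ^ 2) := by
  rw [sin_eq_tsum, mittagLeffler, ← tsum_mul_left]
  refine tsum_congr fun k => ?_
  rw [neg_pow (x ^ 2), ← pow_mul, ← Gamma_nat_eq_factorial]
  push_cast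
  rw [add_assoc, one_add_one_eq_two]
  ring

/-- The Riemann–Liouville fractional integral of order `β` of `f` with base point `a`. The Caputo
derivative of order `α < 1` with base point `a` is the integral of order `1 - α` of `deriv f`;
for memory length `L` the base point is `x - L`. -/
noncomputable def riemannLiouvilleIntegral (β a : ℝ) (f : ℝ → ℝ) (x : ℝ) : ℝ :=
  1 / Gamma β * ∫ u in a..x, (x - u) ^ (β - 1) * f u

lemma riemannLiouvilleIntegral_comp_add_right (β a c x : ℝ) (f : ℝ → ℝ) :
    riemannLiouvilleIntegral β a (fun u => f (u + c)) x =
      riemannLiouvilleIntegral β (a + c) f (x + c) := by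
  simp only [riemannLiouvilleIntegral,
    ← integral_comp_add_right (fun u => (x + c - u) ^ (β - 1) * f u), add_sub_add_right_eq_sub]

lemma riemannLiouvilleIntegral_const_mul (β a c x : ℝ) (f : ℝ → ℝ) :
    riemannLiouvilleIntegral β a (fun u => c * f u) x =
      c * riemannLiouvilleIntegral β a f x := by
  simp only [riemannLiouvilleIntegral, mul_left_comm _ c, intervalIntegral.integral_const_mul]

lemma intervalIntegrable_sub_rpow_mul (hβ : 0 < β) (hf : ContinuousOn f (Set.uIcc a x)) :
    IntervalIntegrable (fun u => (x - u) ^ (β - 1) * f u) volume a x := by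
  have hpow : IntervalIntegrable (fun u : ℝ => u ^ (β - 1)) volume (x - a) 0 :=
    intervalIntegrable_rpow' (by linarith)
  have hkernel : IntervalIntegrable (fun u => (x - u) ^ (β - 1)) volume a x := by
    simpa using hpow.comp_sub_left x
  exact hkernel.mul_continuousOn hf

lemma riemannLiouvilleIntegral_sub (hβ : 0 < β) (hf : ContinuousOn f (Set.uIcc a x))
    (hg : ContinuousOn g (Set.uIcc a x)) :
    riemannLiouvilleIntegral β a (fun u => f u - g u) x =
      riemannLiouvilleIntegral β a f x - riemannLiouvilleIntegral β a g x := by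
  simp only [riemannLiouvilleIntegral, mul_sub]
  rw [integral_sub (intervalIntegrable_sub_rpow_mul hβ hf) (intervalIntegrable_sub_rpow_mul hβ hg),
    mul_sub]

lemma integral_sub_rpow_mul_rpow (hβ : 0 < β) (hs : 0 < s) (hx : 0 < x) :
    ∫ u in 0..x, (x - u) ^ (β - 1) * u ^ (s - 1) =
      x ^ (s + β - 1) * (Gamma s * Gamma β / Gamma (s + β)) := by
  rw [← Complex.ofReal_inj, ← intervalIntegral.integral_ofReal]
  calc ∫ u in 0..x, (((x - u) ^ (β - 1) * u ^ (s - 1) : ℝ) : ℂ)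
      = ∫ u in 0..x, (u : ℂ) ^ ((s : ℂ) - 1) * ((x : ℂ) - u) ^ ((β : ℂ) - 1) := by
        refine integral_congr fun u hu => ?_
        rw [Set.uIcc_of_le hx.le] at hu
        push_cast [Complex.ofReal_cpow hu.1, Complex.ofReal_cpow (sub_nonneg.2 hu.2)]
        rw [mul_comm]
    _ = (x : ℂ) ^ ((s : ℂ) + β - 1) * Complex.betaIntegral s β := Complex.betaIntegral_scaled _ _ hx
    _ = _ := by
        rw [Complex.betaIntegral_eq_Gamma_mul_div _ _ (by simpa) (by simpa)]
        push_cast [Complex.ofReal_cpow hx.le, ← Complex.Gamma_ofReal]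
        rfl

lemma intervalIntegrable_sub_rpow_mul_rpow (hβ : 0 < β) (hs : 0 < s) (hx : 0 < x) :
    IntervalIntegrable (fun u => (x - u) ^ (β - 1) * u ^ (s - 1)) volume 0 x := by
  -- The integral of a non-integrable function is `0` by convention, but this one is positive.
  by_contra h
  have hpos : 0 < x ^ (s + β - 1) * (Gamma s * Gamma β / Gamma (s + β)) := by positivity
  exact hpos.ne' (integral_sub_rpow_mul_rpow hβ hs hx ▸ integral_undef h)

lemma riemannLiouvilleIntegral_congr (h : Set.EqOn f g (Set.uIoo a x)) :
    riemannLiouvilleIntegral β a f x = riemannLiouvilleIntegral β a g x := by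
  simp only [riemannLiouvilleIntegral]
  rw [integral_congr_uIoo fun u hu => congrArg _ (h hu)]

lemma riemannLiouvilleIntegral_tsum {ι : Type*} [Countable ι] {F : ι → ℝ → ℝ} (hβ : 0 < β)
    (hax : a ≤ x)
    (hF : ∀ i, IntervalIntegrable (fun u => (x - u) ^ (β - 1) * F i u) volume a x)
    (hsum : Summable fun i => riemannLiouvilleIntegral β a (fun u => |F i u|) x) :
    riemannLiouvilleIntegral β a (fun u => ∑' i, F i u) x =
      ∑' i, riemannLiouvilleIntegral β a (F i) x := by
  have hnorm : ∀ i, ∫ u in Set.Ioc a x, ‖(x - u) ^ (β - 1) * F i u‖ =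
      ∫ u in Set.Ioc a x, (x - u) ^ (β - 1) * |F i u| := fun i =>
    setIntegral_congr_fun measurableSet_Ioc fun u hu => by
      have hkernel : 0 ≤ (x - u) ^ (β - 1) := rpow_nonneg (sub_nonneg.2 hu.2) _
      simp only [norm_mul, norm_eq_abs, abs_of_nonneg hkernel]
  simp only [riemannLiouvilleIntegral, integral_of_le hax, tsum_mul_left] at hsum ⊢
  have hΓ : 1 / Gamma β ≠ 0 := one_div_ne_zero (Gamma_pos_of_pos hβ).ne'
  rw [summable_mul_left_iff hΓ] at hsum
  simp only [← tsum_mul_left (a := (x - _) ^ (β - 1))]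
  rw [integral_tsum_of_summable_integral_norm (fun i => (hF i).1) (by simpa only [hnorm])]

lemma riemannLiouvilleIntegral_rpow_div_Gamma (hβ : 0 < β) (hs : 0 < s) (hx : 0 < x) :
    riemannLiouvilleIntegral β 0 (fun u => u ^ (s - 1) / Gamma s) x =
      x ^ (s + β - 1) / Gamma (s + β) := by
  have hΓs : Gamma s ≠ 0 := (Gamma_pos_of_pos hs).ne'
  have hΓβ : Gamma β ≠ 0 := (Gamma_pos_of_pos hβ).ne'
  simp only [riemannLiouvilleIntegral, ← mul_div_assoc, intervalIntegral.integral_div,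
    integral_sub_rpow_mul_rpow hβ hs hx]
  field_simp

lemma rpow_mul_natCast_add_sub_one (hx : 0 < x) (a b : ℝ) (k : ℕ) :
    x ^ (a * k + b - 1) = x ^ (b - 1) * (x ^ a) ^ k := by
  rw [← rpow_mul_natCast hx.le, ← rpow_add hx]
  ring_nf

theorem riemannLiouvilleIntegral_mittagLeffler (ha : 0 < a) (hb : 0 < b) (hβ : 0 < β)
    (hx : 0 < x) (c : ℝ) :
    riemannLiouvilleIntegral β 0 (fun u => u ^ (b - 1) * mittagLeffler a b (c * u ^ a)) x =
      x ^ (b + β - 1) * mittagLeffler a (b + β) (c * x ^ a) := by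
  have hs : ∀ k : ℕ, 0 < a * k + b := fun k => by positivity
  have hterm : ∀ (d : ℝ) (k : ℕ), riemannLiouvilleIntegral β 0
      (fun u => d ^ k * (u ^ (a * k + b - 1) / Gamma (a * k + b))) x =
        x ^ (b + β - 1) * ((d * x ^ a) ^ k / Gamma (a * k + (b + β))) := fun d k => by
    rw [riemannLiouvilleIntegral_const_mul, riemannLiouvilleIntegral_rpow_div_Gamma hβ (hs k) hx,
      add_assoc, rpow_mul_natCast_add_sub_one hx, mul_pow]
    ring
  have habs : ∀ k : ℕ, riemannLiouvilleIntegral β 0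
      (fun u => |c ^ k * (u ^ (a * k + b - 1) / Gamma (a * k + b))|) x =
        x ^ (b + β - 1) * ((|c| * x ^ a) ^ k / Gamma (a * k + (b + β))) := fun k => by
    rw [← hterm]
    refine riemannLiouvilleIntegral_congr fun u hu => ?_
    rw [Set.uIoo_of_le hx.le] at hu
    have hΓ : 0 < Gamma (a * k + b) := Gamma_pos_of_pos (hs k)
    have hpow : 0 < u ^ (a * k + b - 1) := rpow_pos_of_pos hu.1 _
    simp only [abs_mul, abs_pow, abs_div, abs_of_pos hΓ, abs_of_pos hpow]
  calc riemannLiouvilleIntegral β 0 (fun u => u ^ (b - 1) * mittagLeffler a b (c * u ^ a)) x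
      = riemannLiouvilleIntegral β 0
          (fun u => ∑' k : ℕ, c ^ k * (u ^ (a * k + b - 1) / Gamma (a * k + b))) x := by
        refine riemannLiouvilleIntegral_congr fun u hu => ?_
        rw [Set.uIoo_of_le hx.le] at hu
        simp only [mittagLeffler, ← tsum_mul_left, rpow_mul_natCast_add_sub_one hu.1, mul_pow]
        exact tsum_congr fun k => by ring
    _ = ∑' k : ℕ, riemannLiouvilleIntegral β 0
          (fun u => c ^ k * (u ^ (a * k + b - 1) / Gamma (a * k + b))) x := by
        refine riemannLiouvilleIntegral_tsum hβ hx.le (fun k => ?_) ?_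
        · convert (intervalIntegrable_sub_rpow_mul_rpow hβ (hs k) hx).const_mul
            (c ^ k / Gamma (a * k + b)) using 2
          ring
        · simpa only [habs] using (summable_mittagLeffler ha (b + β) (|c| * x ^ a)).mul_left _
    _ = x ^ (b + β - 1) * mittagLeffler a (b + β) (c * x ^ a) := by
        simp only [hterm, tsum_mul_left, mittagLeffler]

lemma riemannLiouvilleIntegral_cos (hβ : 0 < β) (hx : 0 < x) :
    riemannLiouvilleIntegral β 0 cos x = x ^ β * mittagLeffler 2 (1 + β) (-x ^ 2) := by
  simpa [← cos_eq_mittagLeffler] using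
    riemannLiouvilleIntegral_mittagLeffler two_pos one_pos hβ hx (-1)

lemma riemannLiouvilleIntegral_sin (hβ : 0 < β) (hx : 0 < x) :
    riemannLiouvilleIntegral β 0 sin x = x ^ (1 + β) * mittagLeffler 2 (2 + β) (-x ^ 2) := by
  have hone : (2 : ℝ) - 1 = 1 := by norm_num
  have hexp : 2 + β - 1 = 1 + β := by ring
  simpa [← sin_eq_mul_mittagLeffler, hone, hexp] using
    riemannLiouvilleIntegral_mittagLeffler two_pos two_pos hβ hx (-1)

lemma riemannLiouvilleIntegral_cos_add (hβ : 0 < β) (a c x : ℝ) :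
    riemannLiouvilleIntegral β a (fun u => cos (u + c)) x =
      cos c * riemannLiouvilleIntegral β a cos x - sin c * riemannLiouvilleIntegral β a sin x := by
  simp only [cos_add, mul_comm _ (cos c), mul_comm _ (sin c)]
  rw [riemannLiouvilleIntegral_sub hβ (by fun_prop) (by fun_prop),
    riemannLiouvilleIntegral_const_mul, riemannLiouvilleIntegral_const_mul]

theorem caputo_sliding_memory_sin_general (hα : α < 1) (hL : 0 < L) (t : ℝ) :
    (1 / Real.Gamma (1 - α)) * ∫ τ in (t - L)..t, (t - τ) ^ (-α) * Real.cos τ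
      = (L ^ (-α) * (mittagLeffler 2 (1 - α) (-(L ^ 2)) - 1 / Real.Gamma (1 - α))) *
          Real.sin (t - L)
        + (L ^ (1 - α) * mittagLeffler 2 (2 - α) (-(L ^ 2))) * Real.cos (t - L) := by
  have hβ : 0 < 1 - α := sub_pos.2 hα
  have hsin : L ^ (-α) * (mittagLeffler 2 (1 - α) (-(L ^ 2)) - 1 / Gamma (1 - α)) =
      -riemannLiouvilleIntegral (1 - α) 0 sin L := by
    have hpow : L ^ (1 + (1 - α)) = L ^ (-α) * L ^ 2 := by
      rw [← rpow_add_natCast hL.ne']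
      push_cast
      ring_nf
    rw [mittagLeffler_eq_one_div_Gamma_add two_pos, add_sub_cancel_left,
      riemannLiouvilleIntegral_sin hβ hL, hpow]
    ring
  have hcos : L ^ (1 - α) * mittagLeffler 2 (2 - α) (-(L ^ 2)) =
      riemannLiouvilleIntegral (1 - α) 0 cos L := by
    rw [riemannLiouvilleIntegral_cos hβ hL]
    ring_nf
  calc (1 / Gamma (1 - α)) * ∫ τ in (t - L)..t, (t - τ) ^ (-α) * cos τ
      = riemannLiouvilleIntegral (1 - α) (t - L) cos t := by
        simp only [riemannLiouvilleIntegral, sub_sub_cancel_left]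
    _ = riemannLiouvilleIntegral (1 - α) 0 (fun u => cos (u + (t - L))) L := by
        rw [riemannLiouvilleIntegral_comp_add_right, zero_add, add_sub_cancel]
    _ = _ := by
        rw [riemannLiouvilleIntegral_cos_add hβ, hsin, hcos]
        ring

/-- Exact value of the Caputo fractional derivative with sliding fixed
memory length `L` of the sine function:
`D_L^α sin(t) = a sin(t-L) + b cos(t-L)` with `a = L^{-α}(E_{2,1-α}(-L²) - 1/Γ(1-α))`
and `b = L^{1-α} E_{2,2-α}(-L²)`. -/
theorem caputo_sliding_memory_sin
    (α L : ℝ) (hα : α ∈ Set.Ioo (0 : ℝ) 1) (hL : 0 < L) :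
    ∀ t : ℝ,
      (1 / Real.Gamma (1 - α)) * ∫ τ in (t - L)..t, (t - τ) ^ (-α) * Real.cos τ
        = (L ^ (-α) * (mittagLeffler 2 (1 - α) (-(L ^ 2)) - 1 / Real.Gamma (1 - α))) *
            Real.sin (t - L)
          + (L ^ (1 - α) * mittagLeffler 2 (2 - α) (-(L ^ 2))) * Real.cos (t - L) :=
  caputo_sliding_memory_sin_general hα.2 hL
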